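/- arXiv:0803.0697 — 9 statements merged into one kernel-verified Lean document; each statement's English description precedes it below -/
import Mathlib

section
/- Let S be a real 2n×2n symplectic matrix. Then for every nonzero complex number μ, the algebraic multiplicity of μ as an eigenvalue of S (i.e., the multiplicity of μ as a root of the characteristic polynomial of S, viewed over ℂ) equals the algebraic multiplicity of μ⁻¹ as an eigenvalue of S. -/
/-!
The relation `Sᵀ J S = J` says `S⁻¹ = -J Sᵀ J`, and `-J = J⁻¹`, so `S⁻¹` is similar to `Sᵀ` and has
the same characteristic polynomial `p` as `S`. On the other hand the characteristic polynomial of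
`S⁻¹` is the reverse of `p` up to the sign `(-1) ^ (2 n)` and the factor `(det S)⁻¹`, both equal
to `1`. Hence `p` is self-reciprocal, `p = reverse p` (`charpoly_reverse_of_mem_symplecticGroup`).
Since `reverse` is multiplicative and takes `X - μ` to `1 - μ X = -μ (X - μ⁻¹)`, it carries a
factor `(X - μ) ^ k` of `p` to a factor `(X - μ⁻¹) ^ k` of `reverse p`, which gives one inequality
between the multiplicities; exchanging `μ` and `μ⁻¹` gives the other.
-/

open Matrix

open Polynomial in
lemma charpoly_reverse_of_mem_symplecticGroup {l R : Type*} [Fintype l] [DecidableEq l]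
    [CommRing R] {A : Matrix (l ⊕ l) (l ⊕ l) R} (hA : A ∈ symplecticGroup l R) :
    A.charpoly.reverse = A.charpoly := by
  have hunit : IsUnit A := (Matrix.isUnit_iff_isUnit_det A).2 (SymplecticGroup.symplectic_det hA)
  have hdet : A.det = 1 := SymplecticGroup.det_eq_one hA
  have hconj : A⁻¹.charpoly = A.charpoly := by
    rw [SymplecticGroup.inv_eq_symplectic_inv A hA, Matrix.charpoly_mul_comm, ← Matrix.mul_assoc,
      Matrix.mul_neg, J_squared, neg_neg, Matrix.one_mul, Matrix.charpoly_transpose]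
  have hinv := Matrix.charpoly_inv A hunit
  rw [hconj, hdet, ← Matrix.reverse_charpoly] at hinv
  simpa [← two_mul] using hinv.symm

open Polynomial in
lemma reverse_X_sub_C {K : Type*} [Field K] {a : K} (ha : a ≠ 0) :
    (X - C a : K[X]).reverse = C (-a) * (X - C a⁻¹) := by
  have h : (X - C a : K[X]).reverse = 1 - C a * X := by
    have hX : (X : K[X]).reverse = 1 := by
      rw [← one_mul (X : K[X]), reverse_mul_X, ← C_1, reverse_C]
    rw [sub_eq_add_neg, ← C_neg, reverse_add_C, hX]
    simp [← sub_eq_add_neg]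
  rw [h, mul_sub, ← C_mul, neg_mul, mul_inv_cancel₀ ha]
  simp
  ring

open Polynomial in
lemma rootMultiplicity_le_inv_of_reverse_eq {K : Type*} [Field K] {p : K[X]} (hp : p ≠ 0)
    (hrev : p.reverse = p) {a : K} (ha : a ≠ 0) :
    p.rootMultiplicity a ≤ p.rootMultiplicity a⁻¹ := by
  have hpow : ∀ k : ℕ, ((X - C a : K[X]) ^ k).reverse = (C (-a) * (X - C a⁻¹)) ^ k := by
    intro k
    induction k with
    | zero => simpa using reverse_C (1 : K)
    | succ k ih => rw [pow_succ, reverse_mul_of_domain, ih, reverse_X_sub_C ha, pow_succ]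
  rw [le_rootMultiplicity_iff hp]
  obtain ⟨q, hq⟩ := pow_rootMultiplicity_dvd p a
  have h := congrArg reverse hq
  rw [reverse_mul_of_domain, hpow, hrev, mul_pow] at h
  exact (Dvd.intro_left _ rfl).trans (Dvd.intro _ h.symm)

/-- The eigenvalues of a real symplectic matrix come in pairs `μ, μ⁻¹`:
for every nonzero `μ ∈ ℂ`, the algebraic multiplicity of `μ` as a root of the
(complexified) characteristic polynomial of `S` equals that of `μ⁻¹`. -/
theorem symplectic_eigenvalue_pairing
    (n : ℕ) (S : Matrix (Fin n ⊕ Fin n) (Fin n ⊕ Fin n) ℝ)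
    (hS : Sᵀ * (Matrix.fromBlocks 0 (-1) 1 0 : Matrix (Fin n ⊕ Fin n) (Fin n ⊕ Fin n) ℝ) * S
        = Matrix.fromBlocks 0 (-1) 1 0)
    (μ : ℂ) (hμ : μ ≠ 0) :
    Polynomial.rootMultiplicity μ ((S.map ((↑) : ℝ → ℂ)).charpoly)
      = Polynomial.rootMultiplicity μ⁻¹ ((S.map ((↑) : ℝ → ℂ)).charpoly) := by
  have hA : S.map ((↑) : ℝ → ℂ) ∈ symplecticGroup (Fin n) ℂ :=
    SymplecticGroup.map_mem (SymplecticGroup.mem_iff'.2 hS) Complex.ofRealHom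
  have hrev := charpoly_reverse_of_mem_symplecticGroup hA
  have hp := (Matrix.charpoly_monic (S.map ((↑) : ℝ → ℂ))).ne_zero
  refine le_antisymm (rootMultiplicity_le_inv_of_reverse_eq hp hrev hμ) ?_
  simpa using rootMultiplicity_le_inv_of_reverse_eq hp hrev (inv_ne_zero hμ)
end

section
/- The real symplectic group Sp(2n, ℝ) is path-connected: for every real 2n×2n symplectic matrix K there exists a continuous map γ : [0,1] → M_{2n}(ℝ) such that γ(t) is symplectic for every t ∈ [0,1], γ(0) = I, and γ(1) = K. -/
/-!
The proof is a Gauss decomposition. Write `K` in blocks `A, B, C, D`. If `A` is invertible, then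
`K = [[1, 0], [Y, 1]] * [[A, 0], [0, A⁻ᵀ]] * [[1, Z], [0, 1]]` with `Y`, `Z` symmetric. The two
unipotent factors are joined to `1` by scaling `Y` and `Z` (`joined_lower`, `joined_upper`). The
middle factor is multiplicative in `A`, so it suffices to treat transvections, which contract by
scaling, and invertible diagonal matrices (`joined_levi`). In each coordinate plane a diagonal
matrix is `diag(d, d⁻¹)`; its modulus is contracted through `exp (t * log |d|)`, and a negative
sign is removed by a rotation through `π`.

The block `A` can always be made invertible by left multiplication with `[[1, x • 1], [0, 1]]`,
i.e. `det (A + x C) ≠ 0` for some real `x` (`exists_det_add_smul_ne_zero`): this is a polynomial in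
`x` which does not vanish at the imaginary unit, because `(A - iC)ᵀ (A + iC) = AᵀA + CᵀC` is
positive definite.
-/

open Matrix

namespace SympPath

variable {n : ℕ}

local notation "Sp" => (symplecticGroup (Fin n) ℝ : Set (Matrix (Fin n ⊕ Fin n) (Fin n ⊕ Fin n) ℝ))

lemma joined_mul {M N : Matrix (Fin n ⊕ Fin n) (Fin n ⊕ Fin n) ℝ}
    (hM : JoinedIn Sp 1 M) (hN : JoinedIn Sp 1 N) : JoinedIn Sp 1 (M * N) := by
  obtain ⟨p, hp⟩ := hM
  obtain ⟨q, hq⟩ := hN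
  refine ⟨⟨⟨fun t => p t * q t, by fun_prop⟩, by simp, by simp⟩, fun t => ?_⟩
  exact (symplecticGroup (Fin n) ℝ).mul_mem (hp t) (hq t)

lemma joined_of_path {M : Matrix (Fin n ⊕ Fin n) (Fin n ⊕ Fin n) ℝ}
    (f : ℝ → Matrix (Fin n ⊕ Fin n) (Fin n ⊕ Fin n) ℝ) (hf : Continuous f)
    (h0 : f 0 = 1) (h1 : f 1 = M) (h : ∀ t, f t ∈ symplecticGroup (Fin n) ℝ) :
    JoinedIn Sp 1 M :=
  JoinedIn.ofLine hf.continuousOn h0 h1 (by rintro _ ⟨t, -, rfl⟩; exact h t)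

lemma joined_upper {X : Matrix (Fin n) (Fin n) ℝ} (hX : Xᵀ = X) :
    JoinedIn Sp 1 (fromBlocks 1 X 0 1) := by
  refine joined_of_path (fun t => fromBlocks 1 (t • X) 0 1) ?_ (by simp) (by simp) fun t => ?_
  · exact Continuous.matrix_fromBlocks (by fun_prop) (by fun_prop) (by fun_prop) (by fun_prop)
  · rw [SymplecticGroup.fromBlocks_mem_iff]
    simp [hX]

lemma joined_lower {X : Matrix (Fin n) (Fin n) ℝ} (hX : Xᵀ = X) :
    JoinedIn Sp 1 (fromBlocks 1 0 X 1) := by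
  refine joined_of_path (fun t => fromBlocks 1 0 (t • X) 1) ?_ (by simp) (by simp) fun t => ?_
  · exact Continuous.matrix_fromBlocks (by fun_prop) (by fun_prop) (by fun_prop) (by fun_prop)
  · rw [SymplecticGroup.fromBlocks_mem_iff]
    simp [hX]

lemma joined_diagonal (d : Fin n → ℝ) (hd : ∀ i, d i ≠ 0) :
    JoinedIn Sp 1 (fromBlocks (diagonal d) 0 0 (diagonal fun i => (d i)⁻¹)) := by
  -- The path `rotation by t * θ` times `diag(exp (t * l), exp (-t * l))` in each plane.
  set θ : Fin n → ℝ := fun i => if d i < 0 then Real.pi else 0 with hθ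
  set l : Fin n → ℝ := fun i => Real.log |d i| with hl
  have hcos : ∀ i, Real.cos (θ i) * Real.exp (l i) = d i := by
    intro i
    simp only [hθ, hl, Real.exp_log (abs_pos.2 (hd i))]
    split_ifs with h
    · simp [abs_of_neg h]
    · simp [abs_of_nonneg (not_lt.1 h)]
  have hcos' : ∀ i, Real.cos (θ i) * Real.exp (-l i) = (d i)⁻¹ := by
    intro i
    simp only [hθ, hl, Real.exp_neg, Real.exp_log (abs_pos.2 (hd i))]
    split_ifs with h
    · simp [abs_of_neg h]
    · simp [abs_of_nonneg (not_lt.1 h)]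
  have hsin : ∀ i, Real.sin (θ i) = 0 := by
    intro i
    simp only [hθ]
    split_ifs <;> simp
  refine joined_of_path (fun t => fromBlocks
      (diagonal fun i => Real.cos (t * θ i) * Real.exp (t * l i))
      (diagonal fun i => -Real.sin (t * θ i) * Real.exp (-(t * l i)))
      (diagonal fun i => Real.sin (t * θ i) * Real.exp (t * l i))
      (diagonal fun i => Real.cos (t * θ i) * Real.exp (-(t * l i)))) ?_ ?_ ?_ fun t => ?_
  · refine Continuous.matrix_fromBlocks ?_ ?_ ?_ ?_ <;>
      exact Continuous.matrix_diagonal (by fun_prop)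
  · simp
  · simp [hcos, hcos', hsin]
  · rw [SymplecticGroup.fromBlocks_mem_iff]
    simp only [diagonal_transpose, diagonal_mul_diagonal, diagonal_sub, ← diagonal_one]
    refine ⟨?_, ?_, ?_⟩
    · congr 1; ext i; ring
    · congr 1; ext i; ring
    · congr 1; ext i
      have h1 : Real.exp (t * l i) * Real.exp (-(t * l i)) = 1 := by
        rw [← Real.exp_add]; simp
      have h2 := Real.sin_sq_add_cos_sq (t * θ i)
      linear_combination h2 +
        (Real.cos (t * θ i) ^ 2 + Real.sin (t * θ i) ^ 2) * h1

lemma joined_transvection (s : TransvectionStruct (Fin n) ℝ) :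
    JoinedIn Sp 1 (fromBlocks s.toMatrix 0 0 (s.toMatrix⁻¹)ᵀ) := by
  obtain ⟨i, j, hij, c⟩ := s
  have hinv : (transvection i j c)⁻¹ = transvection i j (-c) := by
    refine inv_eq_right_inv ?_
    rw [transvection_mul_transvection_same _ _ hij]
    simp
  simp only [TransvectionStruct.toMatrix, hinv]
  refine joined_of_path (fun t => fromBlocks (transvection i j (t * c)) 0 0
    (transvection i j (-(t * c)))ᵀ) ?_ (by simp) (by simp) fun t => ?_
  · have h : ∀ g : ℝ → ℝ, Continuous g → Continuous fun t => transvection i j (g t) := by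
      intro g hg
      unfold transvection
      refine continuous_const.add (continuous_matrix fun a b => ?_)
      by_cases hab : i = a ∧ j = b
      · simpa [single_apply, hab] using hg
      · simpa [single_apply, hab] using continuous_const
    exact Continuous.matrix_fromBlocks (h _ (by fun_prop)) (by fun_prop) (by fun_prop)
      (h _ (by fun_prop)).matrix_transpose
  · rw [SymplecticGroup.fromBlocks_mem_iff]
    simp [← transpose_mul, transvection_mul_transvection_same _ _ hij]

/-- Every Levi factor `diag(A, A⁻ᵀ)` is joined to `1`, also when `det A < 0`. -/
lemma joined_levi (A : Matrix (Fin n) (Fin n) ℝ) (hA : A.det ≠ 0) :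
    JoinedIn Sp 1 (fromBlocks A 0 0 (A⁻¹)ᵀ) := by
  refine diagonal_transvection_induction_of_det_ne_zero
    (fun A => JoinedIn Sp 1 (fromBlocks A 0 0 (A⁻¹)ᵀ)) A hA ?_ joined_transvection ?_
  · intro d hd
    rw [det_diagonal, Finset.prod_ne_zero_iff] at hd
    have hd' : ∀ i, d i ≠ 0 := fun i => hd i (Finset.mem_univ i)
    have : (diagonal d)⁻¹ = diagonal fun i => (d i)⁻¹ := by
      refine inv_eq_right_inv ?_
      simp [diagonal_mul_diagonal, hd']
    simpa [this] using joined_diagonal d hd'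
  · intro A B _ _ hA hB
    have := joined_mul hA hB
    simpa [fromBlocks_multiply, Matrix.mul_inv_rev] using this

lemma joined_of_det_ne_zero {A B C D : Matrix (Fin n) (Fin n) ℝ}
    (h : fromBlocks A B C D ∈ symplecticGroup (Fin n) ℝ) (hA : A.det ≠ 0) :
    JoinedIn Sp 1 (fromBlocks A B C D) := by
  have hu : IsUnit A.det := isUnit_iff_ne_zero.2 hA
  have huT : IsUnit Aᵀ.det := by rwa [det_transpose]
  obtain ⟨h1, -, h3⟩ := SymplecticGroup.fromBlocks_mem_iff.1 h
  obtain ⟨h1', -, -⟩ := SymplecticGroup.fromBlocks_mem_iff.1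
    (show fromBlocks Aᵀ Cᵀ Bᵀ Dᵀ ∈ _ by
      simpa [fromBlocks_transpose] using SymplecticGroup.transpose_mem h)
  simp only [transpose_transpose] at h1'
  have hY : (C * A⁻¹)ᵀ = C * A⁻¹ := by
    rw [transpose_mul, transpose_nonsing_inv]
    calc Aᵀ⁻¹ * Cᵀ = Aᵀ⁻¹ * (Cᵀ * A) * A⁻¹ := by
          rw [← Matrix.mul_assoc, mul_nonsing_inv_cancel_right _ _ hu]
      _ = C * A⁻¹ := by
          rw [← h1, nonsing_inv_mul_cancel_left _ _ huT]
  have hZ : (A⁻¹ * B)ᵀ = A⁻¹ * B := by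
    rw [transpose_mul, transpose_nonsing_inv]
    calc Bᵀ * Aᵀ⁻¹ = A⁻¹ * (A * Bᵀ) * Aᵀ⁻¹ := by
          rw [nonsing_inv_mul_cancel_left _ _ hu]
      _ = A⁻¹ * B := by
          rw [h1', Matrix.mul_assoc, mul_nonsing_inv_cancel_right _ _ huT]
  have hD : C * (A⁻¹ * B) + (A⁻¹)ᵀ = D := by
    have : D = Aᵀ⁻¹ * (1 + Cᵀ * B) := by
      rw [← h3, sub_add_cancel, nonsing_inv_mul_cancel_left _ _ huT]
    rw [this, Matrix.mul_add, Matrix.mul_one, ← Matrix.mul_assoc, ← Matrix.mul_assoc, ← hY,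
      transpose_mul, transpose_nonsing_inv, add_comm]
  have key := joined_mul (joined_mul (joined_lower hY) (joined_levi A hA)) (joined_upper hZ)
  convert key using 1
  simp only [fromBlocks_multiply, Matrix.one_mul, Matrix.mul_one, Matrix.zero_mul, Matrix.mul_zero,
    add_zero, zero_add, nonsing_inv_mul_cancel_right _ _ hu, mul_nonsing_inv_cancel_left _ _ hu, hD]

lemma exists_det_add_smul_ne_zero {A B C D : Matrix (Fin n) (Fin n) ℝ}
    (h : fromBlocks A B C D ∈ symplecticGroup (Fin n) ℝ) :
    ∃ x : ℝ, (A + x • C).det ≠ 0 := by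
  have hpos : (Aᵀ * A + Cᵀ * C).det ≠ 0 := by
    -- `AᵀA + CᵀC` is the upper left block of `MᵀM`, where `M` is the whole matrix.
    have hM : ((fromBlocks A B C D)ᴴ * fromBlocks A B C D).PosDef := by
      refine PosDef.conjTranspose_mul_self _ ?_
      exact mulVec_injective_iff_isUnit.2
        ((isUnit_iff_isUnit_det _).2 (SymplecticGroup.symplectic_det h))
    have := hM.submatrix (e := Sum.inl) Sum.inl_injective
    have h2 : ((fromBlocks A B C D)ᴴ * fromBlocks A B C D).submatrix Sum.inl Sum.inl
        = Aᵀ * A + Cᵀ * C := by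
      rw [conjTranspose_eq_transpose_of_trivial, fromBlocks_transpose, fromBlocks_multiply]
      rfl
    rw [h2] at this
    exact this.det_pos.ne'
  obtain ⟨h1, -, -⟩ := SymplecticGroup.fromBlocks_mem_iff.1 h
  set p : Polynomial ℝ :=
    (A.map Polynomial.C + (Polynomial.X : Polynomial ℝ) • C.map Polynomial.C).det with hp
  have hI : Polynomial.aeval Complex.I p ≠ 0 := by
    let φ : ℝ →+* ℂ := Complex.ofRealHom
    have e1 : Polynomial.aeval Complex.I p = (A.map φ + Complex.I • C.map φ).det := by
      rw [hp, AlgHom.map_det]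
      congr 1
      ext i j
      simp [φ]
      exact mul_comm _ _
    have e2 : ((A.map φ)ᵀ - Complex.I • (C.map φ)ᵀ) * (A.map φ + Complex.I • C.map φ)
        = (Aᵀ * A + Cᵀ * C).map φ := by
      have h1c : (A.map φ)ᵀ * C.map φ = (C.map φ)ᵀ * A.map φ := by
        rw [← transpose_map, ← transpose_map, ← Matrix.map_mul, ← Matrix.map_mul, h1]
      rw [Matrix.map_add _ (map_add φ), Matrix.map_mul, Matrix.map_mul, transpose_map,
        transpose_map, Matrix.sub_mul, Matrix.mul_add, Matrix.mul_add]
      simp only [Matrix.mul_smul, Matrix.smul_mul, h1c, smul_smul, Complex.I_mul_I]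
      module
    rw [e1]
    intro h0
    have := congrArg det e2
    rw [det_mul, h0, mul_zero] at this
    have h3 : ((Aᵀ * A + Cᵀ * C).map φ).det = φ (Aᵀ * A + Cᵀ * C).det :=
      (RingHom.map_det φ _).symm
    rw [h3] at this
    exact hpos (by simpa [φ] using this.symm)
  have hp0 : p ≠ 0 := by
    intro h0
    simp [h0] at hI
  obtain ⟨x, hx⟩ : ∃ x, p.eval x ≠ 0 := by
    by_contra! hall
    exact hp0 (Polynomial.funext fun x => by simpa using hall x)
  refine ⟨x, ?_⟩
  have e : p.eval x = (A + x • C).det := by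
    rw [hp, ← Polynomial.coe_evalRingHom, RingHom.map_det]
    congr 1
    ext i j
    simp
    exact mul_comm _ _
  rwa [← e]

lemma joined_of_mem {K : Matrix (Fin n ⊕ Fin n) (Fin n ⊕ Fin n) ℝ}
    (hK : K ∈ symplecticGroup (Fin n) ℝ) : JoinedIn Sp 1 K := by
  obtain ⟨A, B, C, D, rfl⟩ : ∃ A B C D, K = fromBlocks A B C D :=
    ⟨_, _, _, _, (fromBlocks_toBlocks K).symm⟩
  obtain ⟨x, hx⟩ := exists_det_add_smul_ne_zero hK
  have e : fromBlocks 1 (x • 1) 0 1 * fromBlocks A B C D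
      = fromBlocks (A + x • C) (B + x • D) C D := by
    simp [fromBlocks_multiply]
  have hU : JoinedIn Sp 1 (fromBlocks 1 (x • 1) 0 1) := joined_upper (by simp)
  have hm := (symplecticGroup (Fin n) ℝ).mul_mem hU.target_mem hK
  rw [e] at hm
  have hU' : JoinedIn Sp 1 (fromBlocks 1 (-(x • 1)) 0 1) := joined_upper (by simp)
  have := joined_mul hU' (joined_of_det_ne_zero hm hx)
  simpa [fromBlocks_multiply] using this

end SympPath

/-- The real symplectic group `Sp(2n, ℝ)` is path-connected: every real symplectic
matrix `K` is joined to the identity by a continuous path of symplectic matrices. -/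
theorem symplectic_group_path_connected
    (n : ℕ) (K : Matrix (Fin n ⊕ Fin n) (Fin n ⊕ Fin n) ℝ)
    (hK : Kᵀ * (Matrix.fromBlocks 0 (-1) 1 0 : Matrix (Fin n ⊕ Fin n) (Fin n ⊕ Fin n) ℝ) * K
        = Matrix.fromBlocks 0 (-1) 1 0) :
    ∃ γ : Set.Icc (0:ℝ) 1 → Matrix (Fin n ⊕ Fin n) (Fin n ⊕ Fin n) ℝ,
      Continuous γ ∧
      (∀ t, (γ t)ᵀ * (Matrix.fromBlocks 0 (-1) 1 0 : Matrix (Fin n ⊕ Fin n) (Fin n ⊕ Fin n) ℝ)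
          * γ t = Matrix.fromBlocks 0 (-1) 1 0) ∧
      γ ⟨0, by norm_num⟩ = 1 ∧ γ ⟨1, by norm_num⟩ = K := by
  obtain ⟨p, hp⟩ := SympPath.joined_of_mem (SymplecticGroup.mem_iff'.2 hK)
  exact ⟨p, p.continuous, fun t => SymplecticGroup.mem_iff'.1 (hp t), p.source, p.target⟩
end

section
/- Let H be a complex Hilbert space, T₀ > 0 and h > 0. Let A : [0, T₀] → B(H) be a continuous family of bounded self-adjoint operators, let f : [0, T₀] → H be continuous, and let u : [0, T₀] → H be continuously differentiable with (h/i) u′(y) − A(y) u(y) = f(y) for all y ∈ [0, T₀]. Then sup_{0 ≤ y ≤ T₀} ‖u(y)‖ ≤ ‖u(0)‖ + h⁻¹ ∫₀^{T₀} ‖f(y)‖ dy. -/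
/-!
Since `⟪u, A u⟫` is real for self-adjoint `A`, the equation `u' = (i/h) (f + A u)` gives
`Re ⟪u, u'⟫ ≤ h⁻¹ ‖u‖ ‖f‖` (`re_inner_le_of_semiclassical_eq`): the operator drops out of the
derivative of `‖u‖²`. Gronwall's inequality is replaced by a fencing argument: for `ε > 0`, the
function `‖u(y)‖²` can never cross `B(y)²`, where
`B(y) = ‖u(0)‖ + ε + ε y + h⁻¹ ∫₀^y ‖f‖`, because at a point where they agree one has
`(‖u‖²)' ≤ 2 h⁻¹ B ‖f‖ < 2 B B'`. Working with squares avoids differentiating the norm at zeros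
of `u`. Letting `ε → 0` gives the estimate.
-/

/-- The pointwise energy inequality: the self-adjoint term contributes nothing to
`Re ⟪u, u'⟫ = ½ (‖u‖²)'`. -/
lemma re_inner_le_of_semiclassical_eq
    {H : Type*} [NormedAddCommGroup H] [InnerProductSpace ℂ H] [CompleteSpace H]
    {h : ℝ} (hh : 0 < h) {A : H →L[ℂ] H} (hA : IsSelfAdjoint A) {u u' f : H}
    (heq : ((h : ℂ) / Complex.I) • u' - A u = f) :
    (inner ℂ u u').re ≤ h⁻¹ * (‖u‖ * ‖f‖) := by
  have hc : (h : ℂ) ≠ 0 := by exact_mod_cast hh.ne'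
  have hu' : u' = (Complex.I / h) • (f + A u) := by
    rw [← heq, sub_add_cancel, smul_smul]
    have : Complex.I / h * (h / Complex.I) = 1 := by
      field_simp [Complex.I_ne_zero]
    rw [this, one_smul]
  have him : (inner ℂ u (A u)).im = 0 := by
    have hsymm : inner ℂ (A u) u = inner ℂ u (A u) := hA.isSymmetric u u
    rw [← inner_conj_symm] at hsymm
    exact Complex.conj_eq_iff_im.mp hsymm
  have hre : (inner ℂ u u').re = h⁻¹ * -(inner ℂ u f).im := by
    have hz : Complex.I / (h : ℂ) = ((h⁻¹ : ℝ) : ℂ) * Complex.I := by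
      push_cast
      field_simp
    rw [hu', inner_smul_right, inner_add_right, hz, mul_assoc, Complex.re_ofReal_mul,
      Complex.I_mul_re, Complex.add_im, him, add_zero]
  rw [hre]
  gcongr
  calc -(inner ℂ u f).im ≤ |(inner ℂ u f).im| := neg_le_abs _
    _ ≤ ‖inner ℂ u f‖ := Complex.abs_im_le_norm _
    _ ≤ ‖u‖ * ‖f‖ := norm_inner_le_norm _ _

/-- Energy estimate for the semiclassical Cauchy problem `(h/i) u′ − A(y) u = f` with
a continuous family of bounded self-adjoint operators `A(y)` on a complex Hilbert
space: `sup_{0 ≤ y ≤ T₀} ‖u(y)‖ ≤ ‖u(0)‖ + h⁻¹ ∫₀^{T₀} ‖f(y)‖ dy`. -/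
theorem semiclassical_energy_estimate
    {H : Type*} [NormedAddCommGroup H] [InnerProductSpace ℂ H] [CompleteSpace H]
    (T₀ h : ℝ) (hT₀ : 0 < T₀) (hh : 0 < h)
    (A : ℝ → H →L[ℂ] H) (hAcont : ContinuousOn A (Set.Icc 0 T₀))
    (hAsa : ∀ y ∈ Set.Icc (0:ℝ) T₀, IsSelfAdjoint (A y))
    (f : ℝ → H) (hf : ContinuousOn f (Set.Icc 0 T₀))
    (u u' : ℝ → H)
    (hu : ∀ y ∈ Set.Icc (0:ℝ) T₀, HasDerivWithinAt u (u' y) (Set.Icc 0 T₀) y)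
    (hu' : ContinuousOn u' (Set.Icc 0 T₀))
    (heq : ∀ y ∈ Set.Icc (0:ℝ) T₀, ((h : ℂ) / Complex.I) • u' y - A y (u y) = f y) :
    ∀ y ∈ Set.Icc (0:ℝ) T₀, ‖u y‖ ≤ ‖u 0‖ + h⁻¹ * ∫ t in (0:ℝ)..T₀, ‖f t‖ := by
  intro y hy
  let _ : InnerProductSpace ℝ H := InnerProductSpace.complexToReal
  -- Extending `‖f‖` continuously to all of `ℝ` makes its primitive differentiable everywhere.
  let g : ℝ → ℝ := fun t => ‖f (Set.projIcc 0 T₀ hT₀.le t)‖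
  have hg : Continuous g :=
    (hf.comp_continuous (continuous_subtype_val.comp continuous_projIcc)
      fun t => (Set.projIcc 0 T₀ hT₀.le t).2).norm
  have hgf : ∀ t ∈ Set.Icc (0:ℝ) T₀, g t = ‖f t‖ := fun t ht => by
    simp only [g, Set.projIcc_of_mem hT₀.le ht]
  have hg0 : ∀ t, 0 ≤ g t := fun t => norm_nonneg _
  have hG : ∀ t, HasDerivAt (fun s => ∫ r in (0:ℝ)..s, g r) (g t) t := fun t =>
    intervalIntegral.integral_hasDerivAt_right (hg.intervalIntegrable _ _)
      (hg.stronglyMeasurableAtFilter _ _) hg.continuousAt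
  have key : ∀ ε > 0, ‖u y‖ ≤ ‖u 0‖ + ε + ε * y + h⁻¹ * ∫ r in (0:ℝ)..y, g r := by
    intro ε hε
    let B : ℝ → ℝ := fun s => ‖u 0‖ + ε + ε * s + h⁻¹ * ∫ r in (0:ℝ)..s, g r
    have hB : ∀ t, HasDerivAt B (ε + h⁻¹ * g t) t := fun t => by
      have h1 := (((hasDerivAt_id t).const_mul ε).const_add (‖u 0‖ + ε)).add
        ((hG t).const_mul h⁻¹)
      rw [mul_one] at h1
      exact h1
    have hBpos : ∀ t, 0 ≤ t → 0 < B t := fun t ht => by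
      have : 0 ≤ ∫ r in (0:ℝ)..t, g r :=
        intervalIntegral.integral_nonneg ht fun r _ => hg0 r
      simp only [B]
      positivity
    have hsq := image_le_of_deriv_right_lt_deriv_boundary
      (f := fun t => ‖u t‖ ^ 2) (f' := fun t => 2 * inner ℝ (u t) (u' t))
      (a := 0) (b := T₀) (B := fun t => B t ^ 2)
      (B' := fun t => 2 * B t * (ε + h⁻¹ * g t))
      (fun t ht => ((hu t ht).continuousWithinAt.norm.pow 2))
      (fun t ht => ((hu t (Set.Ico_subset_Icc_self ht)).mono_of_mem_nhdsWithin
        (Icc_mem_nhdsGE_of_mem ht)).norm_sq)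
      (by
        have : ‖u 0‖ ≤ B 0 := by
          simp only [B, intervalIntegral.integral_same]
          linarith
        exact pow_le_pow_left₀ (norm_nonneg _) this 2)
      (fun t => by
        have h2 := (hB t).pow 2
        norm_num at h2
        exact h2)
      (fun t ht hEq => by
        have ht' := Set.Ico_subset_Icc_self ht
        have hBt := hBpos t ht.1
        have hn : ‖u t‖ = B t := (sq_eq_sq₀ (norm_nonneg _) hBt.le).mp hEq
        have hle := re_inner_le_of_semiclassical_eq hh (hAsa t ht') (heq t ht')
        have hri : inner ℝ (u t) (u' t) = (inner ℂ (u t) (u' t)).re := rfl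
        simp only [hri]
        rw [hn, ← hgf t ht'] at hle
        have := mul_pos hBt hε
        linarith) hy
    exact (sq_le_sq₀ (norm_nonneg _) (hBpos y hy.1).le).mp hsq
  have hlim : ‖u y‖ ≤ ‖u 0‖ + h⁻¹ * ∫ r in (0:ℝ)..y, g r := by
    refine le_of_forall_pos_le_add fun δ hδ => ?_
    have hy1 : 0 < 1 + y := by linarith [hy.1]
    have h1 := key (δ / (1 + y)) (div_pos hδ hy1)
    have h2 : δ / (1 + y) + δ / (1 + y) * y = δ := by
      field_simp
    linarith
  have hmono : ∫ r in (0:ℝ)..y, g r ≤ ∫ r in (0:ℝ)..T₀, g r :=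
    intervalIntegral.integral_mono_interval le_rfl hy.1 hy.2
      (Filter.Eventually.of_forall hg0) (hg.intervalIntegrable _ _)
  have hcongr : ∫ r in (0:ℝ)..T₀, g r = ∫ t in (0:ℝ)..T₀, ‖f t‖ :=
    intervalIntegral.integral_congr fun t ht => hgf t (by rwa [Set.uIcc_of_le hT₀.le] at ht)
  rw [← hcongr]
  exact hlim.trans (by gcongr)
end

section
/- Let n ≥ 1 and let A : [0,1] → M_n(ℝ) be smooth, and let φ : [0,1] → M_n(ℝ) be the fundamental solution: φ′(t) = A(t) φ(t) for all t ∈ [0,1], φ(0) = I. Then there exist a smooth B : [0,1] → M_n(ℝ) whose support is a compact subset of the open interval (0,1), and a smooth ψ : [0,1] → M_n(ℝ), such that ψ′(t) = B(t) ψ(t) for all t ∈ [0,1], ψ(0) = I, and ψ(1) = φ(1). -/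
/-!
The new solution is `ψ = φ ∘ g`, where `g : ℝ → ℝ` is a smooth step with `g = 0` for `t ≤ 1/3` and
`g = 1` for `2/3 ≤ t`. By the chain rule it solves `ψ′ = B ψ` with `B t = g′(t) • A (g t)`, and `B`
vanishes off `[1/3, 2/3]` because `g′` does. Smoothness of `ψ` reduces to that of `φ`, which follows
by bootstrapping the equation `φ′ = A φ` (`contDiffOn_fundamental`).
-/

attribute [local instance] Matrix.normedAddCommGroup Matrix.normedSpace

/-- The entrywise sup norm is not submultiplicative, so the product rule for normed algebras does not
apply; smoothness of a matrix product is checked entry by entry. -/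
theorem contDiffOn_matrix_mul {n : ℕ} {k : WithTop ℕ∞} {s : Set ℝ}
    {F G : ℝ → Matrix (Fin n) (Fin n) ℝ}
    (hF : ContDiffOn ℝ k F s) (hG : ContDiffOn ℝ k G s) :
    ContDiffOn ℝ k (fun t => F t * G t) s := by
  have entry : ∀ {H : ℝ → Matrix (Fin n) (Fin n) ℝ}, ContDiffOn ℝ k H s →
      ∀ i j, ContDiffOn ℝ k (fun t => H t i j) s := fun hH i j =>
    contDiffOn_pi.1 (contDiffOn_pi.1 hH i) j
  refine contDiffOn_pi.2 fun i => contDiffOn_pi.2 fun j => ?_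
  simp only [Matrix.mul_apply]
  exact ContDiffOn.sum fun l _ => (entry hF i l).mul (entry hG l j)

/-- A solution of a linear equation with smooth coefficient is smooth: if `φ` is `C^k`, then so is
`φ′ = A φ`, hence `φ` is `C^(k+1)`. -/
theorem contDiffOn_fundamental {n : ℕ} {A φ : ℝ → Matrix (Fin n) (Fin n) ℝ}
    (hA : ContDiffOn ℝ (⊤ : ℕ∞) A (Set.Icc 0 1))
    (hφ : ∀ t ∈ Set.Icc (0:ℝ) 1, HasDerivWithinAt φ (A t * φ t) (Set.Icc 0 1) t) :
    ContDiffOn ℝ (⊤ : ℕ∞) φ (Set.Icc 0 1) := by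
  have hu : UniqueDiffOn ℝ (Set.Icc (0:ℝ) 1) := uniqueDiffOn_Icc one_pos
  refine contDiffOn_infty.2 fun k => ?_
  induction k with
  | zero =>
    exact contDiffOn_zero.2 fun t ht => (hφ t ht).continuousWithinAt
  | succ k ih =>
    push_cast
    rw [contDiffOn_succ_iff_derivWithin hu]
    refine ⟨fun t ht => (hφ t ht).differentiableWithinAt, by simp, ?_⟩
    exact (contDiffOn_matrix_mul (contDiffOn_infty.1 hA k) ih).congr
      fun t ht => (hφ t ht).derivWithin (hu t ht)

/-- A smooth step whose transition takes place inside `[1/3, 2/3]`. -/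
noncomputable def step (t : ℝ) : ℝ := Real.smoothTransition (3 * t - 1)

theorem contDiff_step : ContDiff ℝ (⊤ : ℕ∞) step :=
  Real.smoothTransition.contDiff.comp (by fun_prop)

theorem step_mem (t : ℝ) : step t ∈ Set.Icc (0:ℝ) 1 :=
  ⟨Real.smoothTransition.nonneg _, Real.smoothTransition.le_one _⟩

theorem deriv_step_eq_zero {t : ℝ} (ht : t ∉ Set.Icc (1/3 : ℝ) (2/3)) : deriv step t = 0 := by
  -- `step` is locally constant at `t`.
  have key : ∃ c : ℝ, step =ᶠ[nhds t] fun _ => c := by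
    rcases lt_or_ge t (1/3) with h | h
    · refine ⟨0, ?_⟩
      filter_upwards [Iio_mem_nhds h] with x hx
      exact Real.smoothTransition.zero_of_nonpos (by linarith [Set.mem_Iio.1 hx])
    · have h' : 2/3 < t := not_le.1 fun h2 => ht ⟨h, h2⟩
      refine ⟨1, ?_⟩
      filter_upwards [Ioi_mem_nhds h'] with x hx
      exact Real.smoothTransition.one_of_one_le (by linarith [Set.mem_Ioi.1 hx])
  obtain ⟨c, hc⟩ := key
  rw [hc.deriv_eq, deriv_const]

/-- Reparametrization of a fundamental solution: if `φ′(t) = A(t) φ(t)` on `[0,1]`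
with `φ(0) = I`, then there are a smooth `B : [0,1] → M_n(ℝ)` whose support is a
compact subset of `(0,1)` and a smooth `ψ` with `ψ′(t) = B(t) ψ(t)`, `ψ(0) = I`,
`ψ(1) = φ(1)`. -/
theorem ode_compactly_supported_deformation
    (n : ℕ) (hn : 1 ≤ n)
    (A : ℝ → Matrix (Fin n) (Fin n) ℝ)
    (hA : ContDiffOn ℝ (⊤ : ℕ∞) A (Set.Icc 0 1))
    (φ : ℝ → Matrix (Fin n) (Fin n) ℝ)
    (hφ : ∀ t ∈ Set.Icc (0:ℝ) 1, HasDerivWithinAt φ (A t * φ t) (Set.Icc 0 1) t)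
    (hφ0 : φ 0 = 1) :
    ∃ B ψ : ℝ → Matrix (Fin n) (Fin n) ℝ,
      ContDiffOn ℝ (⊤ : ℕ∞) B (Set.Icc 0 1) ∧
      (∃ K : Set ℝ, IsCompact K ∧ K ⊆ Set.Ioo 0 1 ∧
        ∀ t ∈ Set.Icc (0:ℝ) 1, t ∉ K → B t = 0) ∧
      ContDiffOn ℝ (⊤ : ℕ∞) ψ (Set.Icc 0 1) ∧
      (∀ t ∈ Set.Icc (0:ℝ) 1, HasDerivWithinAt ψ (B t * ψ t) (Set.Icc 0 1) t) ∧
      ψ 0 = 1 ∧ ψ 1 = φ 1 := by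
  have hmaps : Set.MapsTo step (Set.Icc 0 1) (Set.Icc 0 1) := fun t _ => step_mem t
  have hd : ContDiff ℝ (⊤ : ℕ∞) (deriv step) :=
    (contDiff_infty_iff_deriv.1 contDiff_step).2
  refine ⟨fun t => deriv step t • A (step t), φ ∘ step, ?_,
    ⟨Set.Icc (1/3) (2/3), isCompact_Icc, ?_, ?_⟩, ?_, ?_, ?_, ?_⟩
  · exact hd.contDiffOn.smul (hA.comp contDiff_step.contDiffOn hmaps)
  · exact fun t ht => ⟨by linarith [ht.1], by linarith [ht.2]⟩
  · intro t _ ht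
    simp [deriv_step_eq_zero ht]
  · exact (contDiffOn_fundamental hA hφ).comp contDiff_step.contDiffOn hmaps
  · intro t _
    have h1 : HasDerivWithinAt step (deriv step t) (Set.Icc 0 1) t :=
      ((contDiff_step.differentiable (by simp)) t).hasDerivAt.hasDerivWithinAt
    have h2 := (hφ (step t) (step_mem t)).scomp t h1 hmaps
    rw [Function.comp_apply, Matrix.smul_mul]
    exact h2
  · have h : step 0 = 0 := Real.smoothTransition.zero_of_nonpos (by norm_num)
    simp [h, hφ0]
  · have h : step 1 = 1 := Real.smoothTransition.one_of_one_le (by norm_num)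
    simp [h]
end

section
/- Let n ≥ 2, let b : ℝ × ℝ^{n−1} × ℝ^{n−1} → ℝ be smooth and everywhere positive, and set p(x₁, x′, ξ₁, ξ′) = ξ₁² − b(x₁, x′, ξ′)² on ℝ^{2n}. Fix (x₀′, ξ₀′) ∈ ℝ^{n−1} × ℝ^{n−1}. Suppose (y′, η′) : I → ℝ^{n−1} × ℝ^{n−1}, defined on an interval I containing 0, solves the reduced Hamiltonian system d y′/ds = −∂_{ξ′} b(s, y′(s), η′(s)), d η′/ds = ∂_{x′} b(s, y′(s), η′(s)), with y′(0) = x₀′, η′(0) = ξ₀′. Define t(s) = ∫₀^s (2 b(σ, y′(σ), η′(σ)))⁻¹ dσ. Suppose (x(t), ξ(t)) solves Hamilton's equations ẋ = ∂_ξ p, ξ̇ = −∂_x p, with initial data x(0) = (0, x₀′), ξ(0) = (b(0, x₀′, ξ₀′), ξ₀′), defined on t(I). Then for every s ∈ I: x₁(t(s)) = s, x′(t(s)) = y′(s), ξ₁(t(s)) = b(s, y′(s), η′(s)), and ξ′(t(s)) = η′(s). -/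
/-!
Write `w(s) = (s, y′(s), b(s, y′(s), η′(s)), η′(s))` and `z(s) = (x, ξ)(t(s))`. Since `t′ = 1/(2b)`
along the reduced solution, the chain rule shows that `z` solves the non-autonomous system
`dz/ds = (2 b(s, y′(s), η′(s)))⁻¹ H_p(z)`, where `H_p` is the Hamiltonian vector field of `p`.
The curve `w` solves the same system: `H_p = (2ξ₁, -2b ∂_{ξ′}b, 2b ∂_{x₁}b, 2b ∂_{x′}b)` in the
coordinates `(x₁, x′, ξ₁, ξ′)`, `ξ₁ = b` along `w`, and along the reduced flow the contributions of
`y′` and `η′` to `db/ds` cancel, so `db/ds = ∂_{x₁}b` (`fderiv_apply_reduced_field`). Both curves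
agree at `s = 0`, and `H_p` is `C¹`, so they agree by uniqueness for ordinary differential equations
(`eqOn_of_hasDerivWithinAt_smul`), applied on the compact interval between `0` and `s`.
-/

/-- Uniqueness for `f′ = c(s) • H(f)` on a compact interval, with `H` of class `C¹` and `c`
continuous. The initial time `0` may be an endpoint, hence the derivatives within the interval. -/
lemma eqOn_of_hasDerivWithinAt_smul {E : Type*} [NormedAddCommGroup E] [NormedSpace ℝ E]
    [FiniteDimensional ℝ E] {H : E → E} (hH : ContDiff ℝ 1 H) {A B : ℝ} (hA : A ≤ 0) (hB : 0 ≤ B)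
    {c : ℝ → ℝ} (hc : ContinuousOn c (Set.Icc A B)) {f g : ℝ → E}
    (hf : ∀ s ∈ Set.Icc A B, HasDerivWithinAt f (c s • H (f s)) (Set.Icc A B) s)
    (hg : ∀ s ∈ Set.Icc A B, HasDerivWithinAt g (c s • H (g s)) (Set.Icc A B) s)
    (h0 : f 0 = g 0) : Set.EqOn f g (Set.Icc A B) := by
  have hfc : ContinuousOn f (Set.Icc A B) := fun s hs => (hf s hs).continuousWithinAt
  have hgc : ContinuousOn g (Set.Icc A B) := fun s hs => (hg s hs).continuousWithinAt
  obtain ⟨C, hC⟩ := isCompact_Icc.exists_bound_of_continuousOn hc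
  obtain ⟨R₁, hR₁⟩ := isCompact_Icc.exists_bound_of_continuousOn hfc
  obtain ⟨R₂, hR₂⟩ := isCompact_Icc.exists_bound_of_continuousOn hgc
  -- A compact convex set containing both trajectories, on which `H` is Lipschitz.
  have : ProperSpace E := FiniteDimensional.proper ℝ E
  obtain ⟨K, hK⟩ := hH.contDiffOn.exists_lipschitzOnWith one_ne_zero
    (convex_closedBall (0 : E) (max R₁ R₂)) (isCompact_closedBall _ _)
  have hfS : ∀ s ∈ Set.Icc A B, f s ∈ Metric.closedBall (0 : E) (max R₁ R₂) := fun s hs => by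
    simpa using Or.inl (hR₁ s hs)
  have hgS : ∀ s ∈ Set.Icc A B, g s ∈ Metric.closedBall (0 : E) (max R₁ R₂) := fun s hs => by
    simpa using Or.inr (hR₂ s hs)
  have hv : ∀ s ∈ Set.Icc A B, LipschitzOnWith (C.toNNReal * K) (fun z => c s • H z)
      (Metric.closedBall (0 : E) (max R₁ R₂)) := fun s hs => by
    refine LipschitzOnWith.of_dist_le_mul fun x hx y hy => ?_
    rw [dist_smul₀, NNReal.coe_mul, mul_assoc]
    exact mul_le_mul ((hC s hs).trans (Real.le_coe_toNNReal C)) (hK.dist_le_mul x hx y hy)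
      dist_nonneg (NNReal.coe_nonneg _)
  have hR : Set.Icc 0 B ⊆ Set.Icc A B := Set.Icc_subset_Icc_left hA
  have hL : Set.Icc A 0 ⊆ Set.Icc A B := Set.Icc_subset_Icc_right hB
  have hIco : Set.Ico 0 B ⊆ Set.Icc A B := Set.Ico_subset_Icc_self.trans hR
  have hIoc : Set.Ioc A 0 ⊆ Set.Icc A B := Set.Ioc_subset_Icc_self.trans hL
  rw [← Set.Icc_union_Icc_eq_Icc hA hB]
  refine Set.EqOn.union ?_ ?_
  · have hN : ∀ s ∈ Set.Ioc A 0, Set.Icc A B ∈ nhdsWithin s (Set.Iic s) := fun s hs =>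
      Icc_mem_nhdsLE_of_mem ⟨hs.1, hs.2.trans hB⟩
    exact ODE_solution_unique_of_mem_Icc_left (v := fun s z => c s • H z)
      (s := fun _ => Metric.closedBall (0 : E) (max R₁ R₂))
      (fun s hs => hv s (hIoc hs)) (hfc.mono hL)
      (fun s hs => (hf s (hIoc hs)).mono_of_mem_nhdsWithin (hN s hs))
      (fun s hs => hfS s (hIoc hs)) (hgc.mono hL)
      (fun s hs => (hg s (hIoc hs)).mono_of_mem_nhdsWithin (hN s hs))
      (fun s hs => hgS s (hIoc hs)) h0
  · have hN : ∀ s ∈ Set.Ico 0 B, Set.Icc A B ∈ nhdsWithin s (Set.Ici s) := fun s hs =>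
      Icc_mem_nhdsGE_of_mem ⟨hA.trans hs.1, hs.2⟩
    exact ODE_solution_unique_of_mem_Icc_right (v := fun s z => c s • H z)
      (s := fun _ => Metric.closedBall (0 : E) (max R₁ R₂))
      (fun s hs => hv s (hIco hs)) (hfc.mono hR)
      (fun s hs => (hf s (hIco hs)).mono_of_mem_nhdsWithin (hN s hs))
      (fun s hs => hfS s (hIco hs)) (hgc.mono hR)
      (fun s hs => (hg s (hIco hs)).mono_of_mem_nhdsWithin (hN s hs))
      (fun s hs => hgS s (hIco hs)) h0

/-- The fundamental theorem of calculus within a compact interval, for an integrand about which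
nothing is known outside that interval. -/
lemma hasDerivWithinAt_integral_Icc {A B : ℝ} (hA : A ≤ 0) (hB : 0 ≤ B) {c : ℝ → ℝ}
    (hc : ContinuousOn c (Set.Icc A B)) {s : ℝ} (hs : s ∈ Set.Icc A B) :
    HasDerivWithinAt (fun u => ∫ σ in (0:ℝ)..u, c σ) (c s) (Set.Icc A B) s := by
  have hAB : A ≤ B := hA.trans hB
  -- Replace `c` by its continuous extension, constant on either side of the interval.
  set d : ℝ → ℝ := Set.IccExtend hAB ((Set.Icc A B).domRestrict c) with hd
  have hdc : Continuous d := (continuousOn_iff_continuous_domRestrict.1 hc).Icc_extend'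
  have hdeq : ∀ u ∈ Set.Icc A B, d u = c u := fun u hu => by
    rw [hd, Set.IccExtend_of_mem hAB _ hu, Set.domRestrict_apply]
  have hint : ∀ u ∈ Set.Icc A B, (∫ σ in (0:ℝ)..u, c σ) = ∫ σ in (0:ℝ)..u, d σ := fun u hu =>
    intervalIntegral.integral_congr fun σ hσ =>
      (hdeq σ (Set.uIcc_subset_Icc ⟨hA, hB⟩ hu hσ)).symm
  have h := (hdc.integral_hasStrictDerivAt 0 s).hasDerivAt.hasDerivWithinAt (s := Set.Icc A B)
  rw [hdeq s hs] at h
  exact h.congr hint (hint s hs)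

/-- Along the reduced field `(-∂_{ξ′}b, ∂_{x′}b)` the derivative of `b` is `∂_{x₁}b`; here `L` is
the differential of `b`. -/
lemma fderiv_apply_reduced_field {m : ℕ} (L : ℝ × (Fin m → ℝ) × (Fin m → ℝ) →L[ℝ] ℝ) :
    L (1, (fun i => - L (0, 0, Pi.single i 1)), fun i => L (0, Pi.single i 1, 0))
      = L (1, 0, 0) := by
  have hsingle : ∀ i : Fin m, (fun j => if i = j then (1 : ℝ) else 0) = Pi.single i 1 :=
    fun i => funext fun j => by simp [Pi.single_apply, eq_comm]
  have hx : ∀ u : Fin m → ℝ, L (0, u, 0) = ∑ i, u i * L (0, Pi.single i 1, 0) := fun u => by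
    have h := LinearMap.pi_apply_eq_sum_univ
      ((L : _ →ₗ[ℝ] ℝ) ∘ₗ LinearMap.inr ℝ ℝ _ ∘ₗ LinearMap.inl ℝ (Fin m → ℝ) (Fin m → ℝ)) u
    simpa [hsingle] using h
  have hξ : ∀ u : Fin m → ℝ, L (0, 0, u) = ∑ i, u i * L (0, 0, Pi.single i 1) := fun u => by
    have h := LinearMap.pi_apply_eq_sum_univ
      ((L : _ →ₗ[ℝ] ℝ) ∘ₗ LinearMap.inr ℝ ℝ _ ∘ₗ LinearMap.inr ℝ (Fin m → ℝ) (Fin m → ℝ)) u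
    simpa [hsingle] using h
  have hsplit : ∀ u v : Fin m → ℝ, L (1, u, v) = L (1, 0, 0) + L (0, u, 0) + L (0, 0, v) :=
    fun u v => by simp [← map_add]
  rw [hsplit, hx, hξ, add_assoc, ← Finset.sum_add_distrib]
  simp [mul_comm]

/-- The Hamiltonian vector field `(∂_{ξ₁}p, ∂_{ξ′}p)` on positions and `(-∂_{x₁}p, -∂_{x′}p)` on
momenta, in the coordinate order `(x₁, x′, ξ₁, ξ′)`. -/
noncomputable def hamiltonField {m : ℕ} (p : ℝ × (Fin m → ℝ) × ℝ × (Fin m → ℝ) → ℝ)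
    (z : ℝ × (Fin m → ℝ) × ℝ × (Fin m → ℝ)) : ℝ × (Fin m → ℝ) × ℝ × (Fin m → ℝ) :=
  (fderiv ℝ p z (0, 0, 1, 0), fun i => fderiv ℝ p z (0, 0, 0, Pi.single i 1),
    - fderiv ℝ p z (1, 0, 0, 0), fun i => - fderiv ℝ p z (0, Pi.single i 1, 0, 0))

lemma contDiff_hamiltonField {m : ℕ} {p : ℝ × (Fin m → ℝ) × ℝ × (Fin m → ℝ) → ℝ}
    (hp : ContDiff ℝ 2 p) : ContDiff ℝ 1 (hamiltonField p) := by
  have h : ContDiff ℝ 1 (fderiv ℝ p) := hp.fderiv_right (by norm_num)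
  have hv : ∀ v, ContDiff ℝ 1 (fun z => fderiv ℝ p z v) := fun v => h.clm_apply contDiff_const
  exact (hv _).prodMk ((contDiff_pi.2 fun i => hv _).prodMk
    ((hv _).neg.prodMk (contDiff_pi.2 fun i => (hv _).neg)))

/-- The differential of `ξ₁² - β(x₁, x′, ξ′)²`. -/
lemma fderiv_sq_sub_sq {m : ℕ} {β : ℝ × (Fin m → ℝ) × (Fin m → ℝ) → ℝ} (hβ : Differentiable ℝ β)
    (z v : ℝ × (Fin m → ℝ) × ℝ × (Fin m → ℝ)) :
    fderiv ℝ (fun z : ℝ × (Fin m → ℝ) × ℝ × (Fin m → ℝ) =>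
        z.2.2.1 ^ 2 - β (z.1, z.2.1, z.2.2.2) ^ 2) z v
      = 2 * z.2.2.1 * v.2.2.1 - 2 * β (z.1, z.2.1, z.2.2.2)
          * fderiv ℝ β (z.1, z.2.1, z.2.2.2) (v.1, v.2.1, v.2.2.2) := by
  let V := Fin m → ℝ
  let Q : ℝ × V × ℝ × V →L[ℝ] ℝ :=
    (ContinuousLinearMap.fst ℝ ℝ V).comp
      ((ContinuousLinearMap.snd ℝ V (ℝ × V)).comp (ContinuousLinearMap.snd ℝ ℝ (V × ℝ × V)))
  let P : ℝ × V × ℝ × V →L[ℝ] ℝ × V × V :=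
    (ContinuousLinearMap.fst ℝ ℝ (V × ℝ × V)).prod
      (((ContinuousLinearMap.fst ℝ V (ℝ × V)).comp (ContinuousLinearMap.snd ℝ ℝ (V × ℝ × V))).prod
        ((ContinuousLinearMap.snd ℝ ℝ V).comp ((ContinuousLinearMap.snd ℝ V (ℝ × V)).comp
          (ContinuousLinearMap.snd ℝ ℝ (V × ℝ × V)))))
  have hβP : HasFDerivAt (fun z => β (P z)) ((fderiv ℝ β (P z)).comp P) z :=
    (hβ (P z)).hasFDerivAt.comp z P.hasFDerivAt
  have h : HasFDerivAt (fun z => Q z ^ 2 - β (P z) ^ 2) _ z :=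
    (Q.hasFDerivAt.pow 2).sub (hβP.pow 2)
  have hfd : fderiv ℝ (fun z => Q z ^ 2 - β (P z) ^ 2) z v
      = 2 * Q z * Q v - 2 * β (P z) * fderiv ℝ β (P z) (P v) := by
    rw [h.fderiv]
    simp
  exact hfd

/-- Reparametrization of the outgoing bicharacteristic at a noncharacteristic
boundary: with `p(x₁,x′,ξ₁,ξ′) = ξ₁² − b(x₁,x′,ξ′)²` (`b` smooth and positive),
a solution `(y′, η′)` of the reduced Hamiltonian system
`dy′/ds = −∂_{ξ′}b`, `dη′/ds = ∂_{x′}b` with data `(x₀′, ξ₀′)` at `s = 0`, and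
the time change `t(s) = ∫₀^s (2b(σ, y′(σ), η′(σ)))⁻¹ dσ`, the bicharacteristic
`(x(t), ξ(t))` of `p` with `x(0) = (0, x₀′)`, `ξ(0) = (b(0,x₀′,ξ₀′), ξ₀′)` satisfies
`x₁(t(s)) = s`, `x′(t(s)) = y′(s)`, `ξ₁(t(s)) = b(s, y′(s), η′(s))`,
`ξ′(t(s)) = η′(s)`. -/
theorem boundary_bicharacteristic_reparametrization
    (n : ℕ) (hn : 2 ≤ n)
    (b : ℝ → (Fin (n-1) → ℝ) → (Fin (n-1) → ℝ) → ℝ)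
    (hb_smooth : ContDiff ℝ (⊤ : ℕ∞)
      (fun w : ℝ × (Fin (n-1) → ℝ) × (Fin (n-1) → ℝ) => b w.1 w.2.1 w.2.2))
    (hb_pos : ∀ a x' ξ', 0 < b a x' ξ')
    (x₀' ξ₀' : Fin (n-1) → ℝ)
    (I : Set ℝ) (hI : I.OrdConnected) (h0I : (0:ℝ) ∈ I)
    (y' η' : ℝ → Fin (n-1) → ℝ)
    (hy' : ∀ s ∈ I, HasDerivWithinAt y'
      (fun i => - fderiv ℝ
          (fun w : ℝ × (Fin (n-1) → ℝ) × (Fin (n-1) → ℝ) => b w.1 w.2.1 w.2.2)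
          (s, y' s, η' s) (0, 0, Pi.single i 1)) I s)
    (hη' : ∀ s ∈ I, HasDerivWithinAt η'
      (fun i => fderiv ℝ
          (fun w : ℝ × (Fin (n-1) → ℝ) × (Fin (n-1) → ℝ) => b w.1 w.2.1 w.2.2)
          (s, y' s, η' s) (0, Pi.single i 1, 0)) I s)
    (hy'0 : y' 0 = x₀') (hη'0 : η' 0 = ξ₀')
    (t : ℝ → ℝ)
    (ht : ∀ s, t s = ∫ σ in (0:ℝ)..s, (2 * b σ (y' σ) (η' σ))⁻¹)
    (p : ℝ × (Fin (n-1) → ℝ) × ℝ × (Fin (n-1) → ℝ) → ℝ)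
    (hp : ∀ x₁ x' ξ₁ ξ', p (x₁, x', ξ₁, ξ') = ξ₁^2 - (b x₁ x' ξ')^2)
    (X₁ : ℝ → ℝ) (X' : ℝ → Fin (n-1) → ℝ) (Ξ₁ : ℝ → ℝ) (Ξ' : ℝ → Fin (n-1) → ℝ)
    (hX₁ : ∀ τ ∈ t '' I, HasDerivWithinAt X₁
      (fderiv ℝ p (X₁ τ, X' τ, Ξ₁ τ, Ξ' τ) (0, 0, 1, 0)) (t '' I) τ)
    (hX' : ∀ τ ∈ t '' I, HasDerivWithinAt X'
      (fun i => fderiv ℝ p (X₁ τ, X' τ, Ξ₁ τ, Ξ' τ) (0, 0, 0, Pi.single i 1)) (t '' I) τ)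
    (hΞ₁ : ∀ τ ∈ t '' I, HasDerivWithinAt Ξ₁
      (- fderiv ℝ p (X₁ τ, X' τ, Ξ₁ τ, Ξ' τ) (1, 0, 0, 0)) (t '' I) τ)
    (hΞ' : ∀ τ ∈ t '' I, HasDerivWithinAt Ξ'
      (fun i => - fderiv ℝ p (X₁ τ, X' τ, Ξ₁ τ, Ξ' τ) (0, Pi.single i 1, 0, 0)) (t '' I) τ)
    (hX₁0 : X₁ 0 = 0) (hX'0 : X' 0 = x₀')
    (hΞ₁0 : Ξ₁ 0 = b 0 x₀' ξ₀') (hΞ'0 : Ξ' 0 = ξ₀') :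
    ∀ s ∈ I, X₁ (t s) = s ∧ X' (t s) = y' s ∧
      Ξ₁ (t s) = b s (y' s) (η' s) ∧ Ξ' (t s) = η' s := by
  set β : ℝ × (Fin (n-1) → ℝ) × (Fin (n-1) → ℝ) → ℝ := fun w => b w.1 w.2.1 w.2.2 with hβ
  have hβd : Differentiable ℝ β := hb_smooth.differentiable (by simp)
  have hpeq : p = fun z => z.2.2.1 ^ 2 - β (z.1, z.2.1, z.2.2.2) ^ 2 := by
    funext ⟨x₁, x', ξ₁, ξ'⟩
    exact hp x₁ x' ξ₁ ξ'
  have hpC : ContDiff ℝ 2 p := by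
    have hβ2 : ContDiff ℝ 2 β := hb_smooth.of_le (WithTop.coe_le_coe.2 le_top)
    rw [hpeq]
    fun_prop
  have hfp : ∀ z v, fderiv ℝ p z v = 2 * z.2.2.1 * v.2.2.1 - 2 * β (z.1, z.2.1, z.2.2.2)
      * fderiv ℝ β (z.1, z.2.1, z.2.2.2) (v.1, v.2.1, v.2.2.2) := fun z v => by
    rw [hpeq]
    exact fderiv_sq_sub_sq hβd z v
  intro S hS
  -- The compact interval between `0` and `S`.
  set A := min 0 S with hAdef
  set B := max 0 S with hBdef
  have hA : A ≤ 0 := min_le_left _ _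
  have hB : 0 ≤ B := le_max_left _ _
  have hJ : Set.Icc A B ⊆ I := hI.uIcc_subset h0I hS
  have hcurve : ∀ s ∈ Set.Icc A B, HasDerivWithinAt (fun s => (s, y' s, η' s))
      ((1 : ℝ), (fun i => - fderiv ℝ β (s, y' s, η' s) (0, 0, Pi.single i 1)),
        fun i => fderiv ℝ β (s, y' s, η' s) (0, Pi.single i 1, 0)) (Set.Icc A B) s := fun s hs =>
    (hasDerivWithinAt_id s _).prodMk
      (((hy' s (hJ hs)).mono hJ).prodMk ((hη' s (hJ hs)).mono hJ))
  have hβcurve : ∀ s ∈ Set.Icc A B, HasDerivWithinAt (fun s => b s (y' s) (η' s))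
      (fderiv ℝ β (s, y' s, η' s) (1, 0, 0)) (Set.Icc A B) s := fun s hs => by
    have h := (hβd (s, y' s, η' s)).hasFDerivAt.comp_hasDerivWithinAt s (hcurve s hs)
    rwa [fderiv_apply_reduced_field] at h
  have hpos : ∀ s, 0 < 2 * b s (y' s) (η' s) := fun s => mul_pos two_pos (hb_pos _ _ _)
  set c : ℝ → ℝ := fun s => (2 * b s (y' s) (η' s))⁻¹ with hcdef
  have hc : ContinuousOn c (Set.Icc A B) := fun s hs =>
    (continuousWithinAt_const.mul (hβcurve s hs).continuousWithinAt).inv₀ (hpos s).ne'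
  have htd : ∀ s ∈ Set.Icc A B, HasDerivWithinAt t (c s) (Set.Icc A B) s := fun s hs => by
    rw [funext ht]
    exact hasDerivWithinAt_integral_Icc hA hB hc hs
  have hmaps : Set.MapsTo t (Set.Icc A B) (t '' I) := fun s hs => Set.mem_image_of_mem t (hJ hs)
  have ht0 : t 0 = 0 := by simp [ht]
  have key := eqOn_of_hasDerivWithinAt_smul (contDiff_hamiltonField hpC) hA hB hc
    (f := fun s => (X₁ (t s), X' (t s), Ξ₁ (t s), Ξ' (t s)))
    (g := fun s => (s, y' s, b s (y' s) (η' s), η' s))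
    (fun s hs => by
      have hm := hmaps hs
      exact ((hX₁ _ hm).scomp s (htd s hs) hmaps).prodMk
        (((hX' _ hm).scomp s (htd s hs) hmaps).prodMk
          (((hΞ₁ _ hm).scomp s (htd s hs) hmaps).prodMk
            ((hΞ' _ hm).scomp s (htd s hs) hmaps))))
    (fun s hs => by
      have hb0 : b s (y' s) (η' s) ≠ 0 := (hb_pos _ _ _).ne'
      have h := (hasDerivWithinAt_id s (Set.Icc A B)).prodMk
        (((hy' s (hJ hs)).mono hJ).prodMk ((hβcurve s hs).prodMk ((hη' s (hJ hs)).mono hJ)))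
      refine h.congr_deriv ?_
      have hβs : β (s, y' s, η' s) = b s (y' s) (η' s) := rfl
      have hzero : fderiv ℝ β (s, y' s, η' s) (0, 0, 0) = 0 := map_zero _
      simp only [hamiltonField, hfp, hcdef, Prod.smul_mk, smul_eq_mul, hβs, hzero, Prod.mk.injEq]
      refine ⟨by field_simp; simp, funext fun i => ?_, by field_simp; simp, funext fun i => ?_⟩
      · simp only [Pi.smul_apply, smul_eq_mul]
        field_simp
        simp
      · simp only [Pi.smul_apply, smul_eq_mul]
        field_simp
        simp)
    (by simp only [ht0, hX₁0, hX'0, hΞ₁0, hΞ'0, hy'0, hη'0])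
  simpa only [Prod.mk.injEq] using key (show S ∈ Set.Icc A B from ⟨min_le_right _ _, le_max_right _ _⟩)
end

section
/- For h > 0 and k ∈ ℕ, define v : ℝ → ℝ by v(x) = He_k(√(2/h)·x)·exp(−x²/(2h)). Then for every x ∈ ℝ: −h² v″(x) + x² v(x) = h(2k+1) v(x). -/
/-!
Write `p = He_k` and `c = √(2/h)`. The recursion defining the Hermite polynomials gives the
Hermite equation `p'' - X p' + k p = 0` by induction on `k` (`hermite_ode`). Differentiating
`p(cx) exp(-x²/(2h))` twice gives
`(c² p''(cx) - (2cx/h) p'(cx) + (x²/h² - 1/h) p(cx)) exp(-x²/(2h))`. Since `c² = 2/h`, the first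
two terms are `(2/h) (p'' - X p')(cx) = -(2k/h) p(cx)`, and multiplying by `-h²` yields the
eigenvalue equation.
-/

/-- The semiclassical harmonic-oscillator eigenfunction built from the `k`-th
probabilists' Hermite polynomial: `v(x) = He_k(√(2/h)·x)·exp(−x²/(2h))`. -/
noncomputable def hermiteEigenfunction (h : ℝ) (k : ℕ) (x : ℝ) : ℝ :=
  (Polynomial.aeval (Real.sqrt (2 / h) * x) (Polynomial.hermite k)) *
    Real.exp (-x ^ 2 / (2 * h))

section HermiteAux

open Polynomial

/-- Hermite's differential equation. The induction step uses that the hypothesis amounts to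
`He_{k+1}' = (k + 1) He_k`. -/
lemma hermite_ode (k : ℕ) :
    derivative (derivative (hermite k)) - X * derivative (hermite k)
      + (k : ℤ[X]) * hermite k = 0 := by
  induction k with
  | zero => simp
  | succ k ih =>
    have h1 : derivative (hermite (k + 1)) = ((k : ℤ[X]) + 1) * hermite k := by
      rw [hermite_succ]
      simp only [derivative_sub, derivative_mul, derivative_X]
      linear_combination -ih
    have h2 : derivative (derivative (hermite (k + 1)))
        = ((k : ℤ[X]) + 1) * derivative (hermite k) := by
      rw [h1]
      simp [derivative_mul]
    rw [h2, h1, hermite_succ]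
    push_cast
    ring

/-- The product rule for `p(cx) exp(-x²/(2h))`. -/
lemma hasDerivAt_aeval_mul_gaussian (h c : ℝ) (hh : h ≠ 0) (p : ℤ[X]) (x : ℝ) :
    HasDerivAt (fun y : ℝ => aeval (c * y) p * Real.exp (-y ^ 2 / (2 * h)))
      ((c * aeval (c * x) (derivative p) - x / h * aeval (c * x) p)
        * Real.exp (-x ^ 2 / (2 * h))) x := by
  have hp : HasDerivAt (fun y : ℝ => aeval (c * y) p) (aeval (c * x) (derivative p) * c) x :=
    (p.hasDerivAt_aeval (c * x)).comp x (by simpa using (hasDerivAt_id x).const_mul c)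
  have hq : HasDerivAt (fun y : ℝ => -y ^ 2 / (2 * h)) (-(x / h)) x := by
    refine ((hasDerivAt_pow 2 x).fun_neg.div_const (2 * h)).congr_deriv ?_
    push_cast
    field_simp
  refine (hp.fun_mul hq.exp).congr_deriv ?_
  ring

end HermiteAux

/-- The eigenfunction equation for the semiclassical harmonic oscillator:
`−h² v″(x) + x² v(x) = h(2k+1) v(x)` for `v(x) = He_k(√(2/h)·x)·exp(−x²/(2h))`. -/
theorem hermite_harmonic_oscillator_eigenfunction (h : ℝ) (hh : 0 < h) (k : ℕ) :
    ∀ x : ℝ,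
      - h ^ 2 * deriv (deriv (hermiteEigenfunction h k)) x
          + x ^ 2 * hermiteEigenfunction h k x
        = h * (2 * (k : ℝ) + 1) * hermiteEigenfunction h k x := by
  intro x
  set c := Real.sqrt (2 / h) with hc
  have hc2 : c ^ 2 = 2 / h := Real.sq_sqrt (by positivity)
  have hne : h ≠ 0 := hh.ne'
  have hd1 : deriv (hermiteEigenfunction h k) = fun y : ℝ =>
      c * (Polynomial.aeval (c * y) (Polynomial.derivative (Polynomial.hermite k))
          * Real.exp (-y ^ 2 / (2 * h)))
        - y / h * (Polynomial.aeval (c * y) (Polynomial.hermite k)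
          * Real.exp (-y ^ 2 / (2 * h))) := by
    funext y
    refine (hasDerivAt_aeval_mul_gaussian h c hne (Polynomial.hermite k) y).deriv.trans ?_
    ring
  have hd2 := ((hasDerivAt_aeval_mul_gaussian h c hne
      (Polynomial.derivative (Polynomial.hermite k)) x).const_mul c).fun_sub
    (((hasDerivAt_id' x).div_const h).fun_mul
      (hasDerivAt_aeval_mul_gaussian h c hne (Polynomial.hermite k) x))
  have hode := congrArg (Polynomial.aeval (c * x)) (hermite_ode k)
  simp only [map_add, map_sub, map_mul, Polynomial.aeval_X, map_natCast, map_zero] at hode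
  rw [hd1, hd2.deriv]
  simp only [hermiteEigenfunction, ← hc]
  generalize Real.exp (-x ^ 2 / (2 * h)) = E
  generalize Polynomial.aeval (c * x)
    (Polynomial.derivative (Polynomial.derivative (Polynomial.hermite k))) = p2 at *
  generalize Polynomial.aeval (c * x) (Polynomial.derivative (Polynomial.hermite k)) = p1 at *
  generalize Polynomial.aeval (c * x) (Polynomial.hermite k) = p0 at *
  have hc3 : c ^ 2 * h = 2 := by rw [hc2]; field_simp
  field_simp
  linear_combination (-2 * h * E) * hode - h * E * p2 * hc3
end

section
/- Let m ∈ ℕ, m ≥ 1, and suppose (c_j)_{j∈ℕ} is a sequence of functions c_j : (0,1] → ℂ for which there exist constants C_j with |c_j(h)| ≤ C_j h^{(j+1)/m} for all h ∈ (0,1]. Then there exists a function z̃ : (0,1] → ℂ such that for every N ∈ ℕ there is a constant C_N′ with |z̃(h) − Σ_{j=0}^{mN+m} c_j(h)| ≤ C_N′ h^N for all h ∈ (0,1]. -/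
/-!
Put `x = h^{1/m}`, so that the hypothesis reads `‖c_j(h)‖ ≤ D_j x^{j+1}` with `D_j ≥ 0`. Since no
regularity in `h` is required, a sharp cutoff is enough: the `j`-th term is kept exactly when
`x * (2^j D_j) ≤ 1`, and `z(h)` is the sum of the kept terms.

* A kept term is at most `2^{-j} x^j`, so the series converges and its tail from an index
  `M ≥ mN` on is `O(x^{mN}) = O(h^N)` (`norm_cutoffTerm_le`).
* A discarded term has `1 < x * (2^j D_j)`, so it is `O(x^k)` for every `k`
  (`norm_cutoffTerm_sub_le`); only finitely many of them enter the comparison with a partial sum.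
-/

/-- The term `a`, kept if `x * (2^j D) ≤ 1` and replaced by `0` otherwise: a sharp cutoff in the
variable `x = h^{1/m}` at scale `1 / (2^j D)`. -/
noncomputable def cutoffTerm (D x : ℝ) (j : ℕ) (a : ℂ) : ℂ :=
  if x * (2 ^ j * D) ≤ 1 then a else 0

lemma norm_cutoffTerm_le {D x : ℝ} {j : ℕ} {a : ℂ} (hx : 0 ≤ x)
    (ha : ‖a‖ ≤ D * x ^ (j + 1)) :
    ‖cutoffTerm D x j a‖ ≤ (1 / 2) ^ j * x ^ j := by
  unfold cutoffTerm
  split_ifs with hcut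
  · calc ‖a‖ ≤ D * x ^ (j + 1) := ha
      _ = (x * (2 ^ j * D)) * ((1 / 2) ^ j * x ^ j) := by
          rw [one_div, inv_pow]
          field_simp
          ring
      _ ≤ 1 * ((1 / 2) ^ j * x ^ j) := by gcongr
      _ = _ := one_mul _
  · rw [norm_zero]
    positivity

lemma norm_cutoffTerm_sub_le {D x : ℝ} {j : ℕ} {a : ℂ} (hD : 0 ≤ D) (hx : 0 ≤ x)
    (hx1 : x ≤ 1) (ha : ‖a‖ ≤ D * x ^ (j + 1)) (k : ℕ) :
    ‖cutoffTerm D x j a - a‖ ≤ D * (2 ^ j * D) ^ k * x ^ k := by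
  unfold cutoffTerm
  split_ifs with hcut
  · rw [sub_self, norm_zero]
    positivity
  · rw [zero_sub, norm_neg]
    calc ‖a‖ ≤ D * x ^ (j + 1) := ha
      _ ≤ D * 1 := by gcongr; exact pow_le_one₀ hx hx1
      _ ≤ D * (x * (2 ^ j * D)) ^ k := by
          gcongr
          exact one_le_pow₀ (not_le.mp hcut).le
      _ = _ := by rw [mul_pow]; ring

/-- Borel resummation: if `c_j(h) = O(h^{(j+1)/m})` on `(0,1]`, then there is a
function `z̃(h)` admitting `Σ_j c_j(h)` as an asymptotic expansion to all orders:
for every `N` there is `C_N′` with `|z̃(h) − Σ_{j=0}^{mN+m} c_j(h)| ≤ C_N′ h^N`. -/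
theorem borel_resummation (m : ℕ) (hm : 1 ≤ m)
    (c : ℕ → ℝ → ℂ)
    (hc : ∀ j : ℕ, ∃ C : ℝ, ∀ h ∈ Set.Ioc (0:ℝ) 1,
      ‖c j h‖ ≤ C * h ^ (((j : ℝ) + 1) / (m : ℝ))) :
    ∃ z : ℝ → ℂ, ∀ N : ℕ, ∃ C' : ℝ, ∀ h ∈ Set.Ioc (0:ℝ) 1,
      ‖z h - ∑ j ∈ Finset.range (m * N + m + 1), c j h‖ ≤ C' * h ^ (N : ℝ) := by
  choose C hC using hc
  have hm0 : (m : ℝ) ≠ 0 := by exact_mod_cast (by omega : m ≠ 0)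
  refine ⟨fun h => ∑' j, cutoffTerm |C j| (h ^ (1 / (m : ℝ))) j (c j h), fun N =>
    ⟨∑ j ∈ Finset.range (m * N + m + 1), |C j| * (2 ^ j * |C j|) ^ (m * N) + 2, ?_⟩⟩
  intro h hh
  have hh0 : 0 ≤ h := hh.1.le
  have hbound (j : ℕ) : ‖c j h‖ ≤ |C j| * (h ^ (1 / (m : ℝ))) ^ (j + 1) := by
    have hpow : h ^ (((j : ℝ) + 1) / (m : ℝ)) = (h ^ (1 / (m : ℝ))) ^ (j + 1) := by
      rw [← Real.rpow_natCast, ← Real.rpow_mul hh0]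
      congr 1
      push_cast
      ring
    rw [← hpow]
    exact (hC j h hh).trans (by gcongr; exact le_abs_self _)
  have hN : h ^ (N : ℝ) = (h ^ (1 / (m : ℝ))) ^ (m * N) := by
    rw [← Real.rpow_natCast, ← Real.rpow_mul hh0]
    congr 1
    push_cast
    field_simp
  have hx : 0 ≤ h ^ (1 / (m : ℝ)) := Real.rpow_nonneg hh0 _
  have hx1 : h ^ (1 / (m : ℝ)) ≤ 1 := Real.rpow_le_one hh0 hh.2 (by positivity)
  rw [hN]
  dsimp only
  generalize h ^ (1 / (m : ℝ)) = x at hbound hx hx1 ⊢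
  have hterm (j : ℕ) := norm_cutoffTerm_le hx (hbound j)
  have hsum : Summable fun j => cutoffTerm |C j| x j (c j h) := by
    refine Summable.of_norm_bounded summable_geometric_two fun j => (hterm j).trans ?_
    exact mul_le_of_le_one_right (by positivity) (pow_le_one₀ hx hx1)
  rw [← hsum.sum_add_tsum_nat_add (m * N + m + 1), add_sub_right_comm, ← Finset.sum_sub_distrib,
    add_mul, Finset.sum_mul]
  refine (norm_add_le _ _).trans (add_le_add ?_ ?_)
  · exact norm_sum_le_of_le _ fun j _ =>
      norm_cutoffTerm_sub_le (abs_nonneg _) hx hx1 (hbound j) _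
  · refine tsum_of_norm_bounded (hasSum_geometric_two.mul_right _) fun j => (hterm _).trans ?_
    gcongr ?_ * ?_
    · exact pow_le_pow_of_le_one (by norm_num) (by norm_num) (by omega)
    · exact pow_le_pow_of_le_one hx hx1 (by omega)
end

section
/- Let S be a complex 2n×2n symplectic matrix and let μ, ν ∈ ℂ with μν ≠ 1. If u, v ∈ ℂ^{2n} are generalized eigenvectors, (S − μI)^{2n} u = 0 and (S − νI)^{2n} v = 0, then uᵀ J v = 0; that is, the generalized eigenspaces of S for eigenvalues μ and ν with μν ≠ 1 are orthogonal with respect to the symplectic bilinear form ω(u, v) = uᵀ J v. -/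
/-!
Write `ω(u, v) = uᵀ J v`, `u' = (S - μ) u` and `v' = (S - ν) v`. Since `S` preserves `ω`,
`ω(u, v) = ω(S u, S v) = ω(u' + μ u, v' + ν v)`, that is
`(1 - μ ν) ω(u, v) = ω(u', v') + ν ω(u', v) + μ ω(u, v')`.
Passing to `u'` or `v'` lowers the order of the generalized eigenvector, so by induction on the two
orders the right-hand side vanishes, and `μ ν ≠ 1` gives `ω(u, v) = 0`.
-/

open Matrix

/-- Orthogonality of generalized eigenvectors of arbitrary orders `a` and `b`, for any bilinear form
`J` preserved by `S`. Keeping the two orders independent is what makes the induction work. -/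
theorem dotProduct_mulVec_eq_zero_of_pow_mulVec_eq_zero
    {m K : Type*} [Fintype m] [DecidableEq m] [Field K] (S J : Matrix m m K)
    (hS : Sᵀ * J * S = J) (μ ν : K) (hμν : μ * ν ≠ 1) (a b : ℕ) (u v : m → K)
    (hu : ((S - μ • 1) ^ a).mulVec u = 0) (hv : ((S - ν • 1) ^ b).mulVec v = 0) :
    u ⬝ᵥ J.mulVec v = 0 := by
  induction a generalizing b u v with
  | zero =>
    rw [pow_zero, one_mulVec] at hu
    simp [hu]
  | succ a iha =>
    induction b generalizing v with
    | zero =>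
      rw [pow_zero, one_mulVec] at hv
      simp [hv]
    | succ b ihb =>
      have hu' : ((S - μ • 1) ^ a).mulVec ((S - μ • 1).mulVec u) = 0 := by
        rw [mulVec_mulVec, ← pow_succ, hu]
      have hv' : ((S - ν • 1) ^ b).mulVec ((S - ν • 1).mulVec v) = 0 := by
        rw [mulVec_mulVec, ← pow_succ, hv]
      have h₁ := iha b _ _ hu' hv'
      have h₂ := iha (b + 1) _ _ hu' hv
      have h₃ := ihb _ hv'
      have hω : S.mulVec u ⬝ᵥ J.mulVec (S.mulVec v) = u ⬝ᵥ J.mulVec v := by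
        conv_rhs => rw [← hS]
        rw [← mulVec_mulVec, ← mulVec_mulVec, dotProduct_mulVec u, vecMul_transpose]
      simp only [sub_mulVec, smul_mulVec, one_mulVec, mulVec_sub, mulVec_smul, sub_dotProduct,
        dotProduct_sub, smul_dotProduct, dotProduct_smul, smul_eq_mul, hω] at h₁ h₂ h₃
      have h : (1 - μ * ν) * (u ⬝ᵥ J.mulVec v) = 0 := by
        linear_combination h₁ + ν * h₂ + μ * h₃
      exact (mul_eq_zero.mp h).resolve_left (sub_ne_zero.mpr hμν.symm)

/-- Generalized eigenspaces of a complex symplectic matrix `S` for eigenvalues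
`μ, ν` with `μν ≠ 1` are orthogonal for the symplectic form `ω(u,v) = uᵀ J v`. -/
theorem symplectic_generalized_eigenspaces_orthogonal
    (n : ℕ) (S : Matrix (Fin n ⊕ Fin n) (Fin n ⊕ Fin n) ℂ)
    (hS : Sᵀ * (Matrix.fromBlocks 0 (-1) 1 0 : Matrix (Fin n ⊕ Fin n) (Fin n ⊕ Fin n) ℂ) * S
        = Matrix.fromBlocks 0 (-1) 1 0)
    (μ ν : ℂ) (hμν : μ * ν ≠ 1)
    (u v : Fin n ⊕ Fin n → ℂ)
    (hu : ((S - μ • 1) ^ (2 * n)).mulVec u = 0)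
    (hv : ((S - ν • 1) ^ (2 * n)).mulVec v = 0) :
    u ⬝ᵥ (Matrix.fromBlocks 0 (-1) 1 0 : Matrix (Fin n ⊕ Fin n) (Fin n ⊕ Fin n) ℂ).mulVec v
      = 0 := by
  exact dotProduct_mulVec_eq_zero_of_pow_mulVec_eq_zero S _ hS μ ν hμν _ _ u v hu hv
end

section
/- Define Ṽ : ℝ² → ℝ by Ṽ(y, z) = cosh⁻²(y)·(2z⁴ − z² + 1)⁻² − 1. Then (0, 0), (0, 1/2) and (0, −1/2) are critical points of Ṽ (the gradient of Ṽ vanishes there); the Hessian of Ṽ at (0, 0) is the diagonal matrix diag(−2, 4), which is nondegenerate with signature (−, +); and the Hessian of Ṽ at (0, ±1/2) is the diagonal matrix diag(−128/49, −4096/343), which is nondegenerate and negative definite (signature (−, −)). -/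
/-! The potential is a product `f(y) g(z) - 1` with `f = cosh⁻²` and `g = q⁻²`, where
`q = 2z⁴ - z² + 1 > 0`. Its first partial derivatives have closed forms (`deriv_effPot_y`,
`deriv_effPot_z`) with factors `sinh y` and `q'(z) = 8z³ - 2z`. The first vanishes at `y = 0`,
the second exactly at `z = 0, ±1/2`, which gives the critical points and the vanishing of the
mixed derivatives. At these points the pure second derivatives reduce to `-2 q⁻²` and
`-2 q'' q⁻³`. -/

/-- The effective potential `Ṽ(y,z) = cosh⁻²(y)·(2z⁴ − z² + 1)⁻² − 1` of the
geodesic flow of `ds² = cosh²y (2z⁴−z²+1)² dx² + dy² + dz²`. -/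
noncomputable def effPot (y z : ℝ) : ℝ :=
  ((Real.cosh y) ^ 2)⁻¹ * ((2 * z ^ 4 - z ^ 2 + 1) ^ 2)⁻¹ - 1

theorem quartic_pos (z : ℝ) : 0 < 2 * z ^ 4 - z ^ 2 + 1 := by
  nlinarith [sq_nonneg (z ^ 2), sq_nonneg (z ^ 2 - 1)]

theorem hasDerivAt_quartic (z : ℝ) :
    HasDerivAt (fun z : ℝ => 2 * z ^ 4 - z ^ 2 + 1) (8 * z ^ 3 - 2 * z) z := by
  have h := (((hasDerivAt_pow 4 z).const_mul 2).sub (hasDerivAt_pow 2 z)).add_const 1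
  refine HasDerivAt.congr_deriv h ?_
  norm_num
  ring

theorem deriv_effPot_y (y z : ℝ) :
    deriv (fun y => effPot y z) y =
      -2 * Real.sinh y / Real.cosh y ^ 3 * ((2 * z ^ 4 - z ^ 2 + 1) ^ 2)⁻¹ := by
  have hc : Real.cosh y ≠ 0 := (Real.cosh_pos y).ne'
  have h := ((((Real.hasDerivAt_cosh y).pow 2).inv (pow_ne_zero 2 hc)).mul_const
    ((2 * z ^ 4 - z ^ 2 + 1) ^ 2)⁻¹).sub_const 1
  refine (HasDerivAt.congr_deriv h ?_).deriv
  congr 1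
  norm_num
  field_simp

theorem deriv_effPot_z (y z : ℝ) :
    deriv (fun z => effPot y z) z =
      (Real.cosh y ^ 2)⁻¹ * (-2 * (8 * z ^ 3 - 2 * z) / (2 * z ^ 4 - z ^ 2 + 1) ^ 3) := by
  have hq := (quartic_pos z).ne'
  have h := ((((hasDerivAt_quartic z).pow 2).inv (pow_ne_zero 2 hq)).const_mul
    (Real.cosh y ^ 2)⁻¹).sub_const 1
  refine (HasDerivAt.congr_deriv h ?_).deriv
  congr 1
  rw [div_eq_div_iff (by simpa using hq) (pow_ne_zero 3 hq)]
  norm_num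
  ring

theorem deriv_deriv_effPot_yy (z : ℝ) :
    deriv (fun y => deriv (fun y' => effPot y' z) y) 0 =
      -2 * ((2 * z ^ 4 - z ^ 2 + 1) ^ 2)⁻¹ := by
  simp only [deriv_effPot_y]
  have hc : Real.cosh 0 ≠ 0 := (Real.cosh_pos 0).ne'
  have h := ((((Real.hasDerivAt_sinh 0).const_mul (-2)).div
    ((Real.hasDerivAt_cosh 0).pow 3) (pow_ne_zero 3 hc)).mul_const
    ((2 * z ^ 4 - z ^ 2 + 1) ^ 2)⁻¹)
  refine (HasDerivAt.congr_deriv h ?_).deriv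
  simp

/-- The term with the square of `8z³ - 2z` drops out at a critical point of the quartic. -/
theorem deriv_deriv_effPot_zz (z : ℝ) (hz : 8 * z ^ 3 - 2 * z = 0) :
    deriv (fun z => deriv (fun z' => effPot 0 z') z) z =
      -2 * (24 * z ^ 2 - 2) / (2 * z ^ 4 - z ^ 2 + 1) ^ 3 := by
  simp only [deriv_effPot_z]
  have hq := (quartic_pos z).ne'
  have hn : HasDerivAt (fun z : ℝ => -2 * (8 * z ^ 3 - 2 * z)) (-2 * (24 * z ^ 2 - 2)) z := by
    have h := (((hasDerivAt_pow 3 z).const_mul 8).sub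
      ((hasDerivAt_id z).const_mul 2)).const_mul (-2)
    refine HasDerivAt.congr_deriv h ?_
    norm_num
    ring
  have h := (hn.div ((hasDerivAt_quartic z).pow 3) (pow_ne_zero 3 hq)).const_mul
    (Real.cosh 0 ^ 2)⁻¹
  refine (HasDerivAt.congr_deriv h ?_).deriv
  simp only [hz, Pi.pow_apply, Real.cosh_zero]
  generalize 2 * z ^ 4 - z ^ 2 + 1 = q at hq
  field_simp
  ring

theorem deriv_deriv_effPot_zy (z₀ : ℝ) :
    deriv (fun z => deriv (fun y => effPot y z) 0) z₀ = 0 := by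
  simp [deriv_effPot_y]

theorem deriv_deriv_effPot_yz (z₀ : ℝ) (hz : 8 * z₀ ^ 3 - 2 * z₀ = 0) :
    deriv (fun y => deriv (fun z => effPot y z) z₀) 0 = 0 := by
  simp [deriv_effPot_z, hz]

/-- `(0,0)`, `(0,1/2)`, `(0,−1/2)` are critical points of
`Ṽ(y,z) = cosh⁻²(y)(2z⁴−z²+1)⁻² − 1`; the Hessian at `(0,0)` is `diag(−2, 4)`
(nondegenerate, signature `(−,+)`), and the Hessian at `(0, ±1/2)` is
`diag(−128/49, −4096/343)` (nondegenerate, negative definite). -/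
theorem effPot_critical_points_and_hessians :
    (∀ z₀ ∈ ({0, 1/2, -1/2} : Set ℝ),
      deriv (fun y => effPot y z₀) 0 = 0 ∧ deriv (fun z => effPot 0 z) z₀ = 0) ∧
    (deriv (fun y => deriv (fun y' => effPot y' 0) y) 0 = -2 ∧
     deriv (fun z => deriv (fun z' => effPot 0 z') z) 0 = 4 ∧
     deriv (fun z => deriv (fun y => effPot y z) 0) 0 = 0 ∧
     deriv (fun y => deriv (fun z => effPot y z) 0) 0 = 0) ∧
    (∀ z₀ ∈ ({1/2, -1/2} : Set ℝ),
      deriv (fun y => deriv (fun y' => effPot y' z₀) y) 0 = -128/49 ∧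
      deriv (fun z => deriv (fun z' => effPot 0 z') z) z₀ = -4096/343 ∧
      deriv (fun z => deriv (fun y => effPot y z) 0) z₀ = 0 ∧
      deriv (fun y => deriv (fun z => effPot y z) z₀) 0 = 0) ∧
    ((-2 : ℝ) < 0 ∧ (0 : ℝ) < 4 ∧ (-128/49 : ℝ) < 0 ∧ (-4096/343 : ℝ) < 0) := by
  refine ⟨?_, ⟨?_, ?_, deriv_deriv_effPot_zy 0, deriv_deriv_effPot_yz 0 (by norm_num)⟩, ?_,
    by norm_num⟩
  · intro z₀ hz₀
    have hz : 8 * z₀ ^ 3 - 2 * z₀ = 0 := by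
      rcases hz₀ with rfl | rfl | rfl <;> norm_num
    exact ⟨by simp [deriv_effPot_y], by simp [deriv_effPot_z, hz]⟩
  · rw [deriv_deriv_effPot_yy]; norm_num
  · rw [deriv_deriv_effPot_zz 0 (by norm_num)]; norm_num
  · intro z₀ hz₀
    have hz : 8 * z₀ ^ 3 - 2 * z₀ = 0 := by
      rcases hz₀ with rfl | rfl <;> norm_num
    refine ⟨?_, ?_, deriv_deriv_effPot_zy z₀, deriv_deriv_effPot_yz z₀ hz⟩
    · rw [deriv_deriv_effPot_yy]
      rcases hz₀ with rfl | rfl <;> norm_num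
    · rw [deriv_deriv_effPot_zz z₀ hz]
      rcases hz₀ with rfl | rfl <;> norm_num
end
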